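/- (First-order ε-optimum exponent for a mixed memoryless null hypothesis against a memoryless alternative.) Let 𝒳 be a finite alphabet, (Θ, w) a probability space, {P_θ} a measurable family of distributions on 𝒳, and let the null hypothesis be the mixed memoryless source P_{X^n}(x) = ∫_Θ ∏_{i=1}^n P_θ(x_i) dw(θ). Let the alternative hypothesis be the stationary memoryless source P_{X̄^n}(x) = ∏_{i=1}^n P_{X̄}(x_i) where P_{X̄} is a distribution on 𝒳 with P_{X̄}(x) > 0 for all x ∈ 𝒳. Then for every ε with 0 ≤ ε < 1, B_ε(X‖X̄) = sup{ R ∈ ℝ : w({ θ : D(P_θ‖P_{X̄}) < R }) ≤ ε }, where D(P‖Q) = Σ_{x∈𝒳} P(x) log( P(x)/Q(x) ) is the Kullback–Leibler divergence. -/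

import Mathlib

open scoped BigOperators
open MeasureTheory

/-- Probability of a set `A` under a distribution `P` on a finite type. -/
noncomputable def prob {α : Type*} [Fintype α] (P : α → ℝ) (A : Set α) : ℝ :=
  ∑ x, A.indicator P x

/-- Type I error probability `μ_n = Pr{X^n ∉ A_n}` of the acceptance regions `A`
for the general source `X`. -/
noncomputable def typeI {𝒳 : Type*} [Fintype 𝒳] (X : (n : ℕ) → (Fin n → 𝒳) → ℝ)
    (A : (n : ℕ) → Set (Fin n → 𝒳)) (n : ℕ) : ℝ :=
  prob (X n) ((A n)ᶜ)

/-- Type II error probability `λ_n = Pr{X̄^n ∈ A_n}` of the acceptance regions `A`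
for the general source `X̄`. -/
noncomputable def typeII {𝒳 : Type*} [Fintype 𝒳] (Xbar : (n : ℕ) → (Fin n → 𝒳) → ℝ)
    (A : (n : ℕ) → Set (Fin n → 𝒳)) (n : ℕ) : ℝ :=
  prob (Xbar n) (A n)

/-- `R` is `ε`-achievable: there are acceptance regions with
`limsup μ_n ≤ ε` and `liminf (1/n) log (1/λ_n) ≥ R`. -/
def EpsAchievable {𝒳 : Type*} [Fintype 𝒳] (X Xbar : (n : ℕ) → (Fin n → 𝒳) → ℝ)
    (ε R : ℝ) : Prop :=
  ∃ A : (n : ℕ) → Set (Fin n → 𝒳),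
    Filter.limsup (typeI X A) Filter.atTop ≤ ε ∧
    R ≤ Filter.liminf (fun n : ℕ => (1 / (n : ℝ)) * Real.log (1 / typeII Xbar A n))
      Filter.atTop

/-- The first-order `ε`-optimum exponent `B_ε(X‖X̄)`. -/
noncomputable def Beps {𝒳 : Type*} [Fintype 𝒳]
    (X Xbar : (n : ℕ) → (Fin n → 𝒳) → ℝ) (ε : ℝ) : ℝ :=
  sSup {R : ℝ | EpsAchievable X Xbar ε R}

/-- Kullback–Leibler divergence `D(P‖Q) = ∑_x P(x) log (P(x)/Q(x))` on a finite alphabet. -/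
noncomputable def KL {𝒳 : Type*} [Fintype 𝒳] (P Q : 𝒳 → ℝ) : ℝ :=
  ∑ x, P x * Real.log (P x / Q x)

section helpers
open Filter

variable {𝒳 : Type*} [Fintype 𝒳]

lemma aux_prob_univ (n : ℕ) (p : 𝒳 → ℝ) (hp1 : ∑ x, p x = 1) :
    ∑ x : Fin n → 𝒳, ∏ i, p (x i) = 1 := by
  rw [← Fintype.sum_pow, hp1, one_pow]

lemma aux_moment (p g : 𝒳 → ℝ) (hp1 : ∑ x, p x = 1) (hg : ∑ x, p x * g x = 0) (n : ℕ) :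
    (∑ x : Fin n → 𝒳, (∏ i, p (x i)) * (∑ i, g (x i)) = 0) ∧
    (∑ x : Fin n → 𝒳, (∏ i, p (x i)) * (∑ i, g (x i)) ^ 2 = n * ∑ x, p x * g x ^ 2) := by
  induction n with
  | zero => simp
  | succ n ih =>
    obtain ⟨h1, h2⟩ := ih
    have h0 := aux_prob_univ n p hp1
    constructor
    · rw [← (Fin.consEquiv (fun _ => 𝒳)).sum_comp, Fintype.sum_prod_type]
      simp only [Fin.consEquiv_apply, Fin.prod_univ_succ, Fin.sum_univ_succ, Fin.cons_zero,
        Fin.cons_succ]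
      have : ∀ a : 𝒳, ∑ y : Fin n → 𝒳, p a * (∏ i, p (y i)) * (g a + ∑ i, g (y i)) =
          p a * g a * (∑ y : Fin n → 𝒳, ∏ i, p (y i)) +
          p a * ∑ y : Fin n → 𝒳, (∏ i, p (y i)) * ∑ i, g (y i) := by
        intro a
        rw [Finset.mul_sum, Finset.mul_sum, ← Finset.sum_add_distrib]
        exact Finset.sum_congr rfl fun y _ => by ring
      simp only [this, h0, h1, mul_one, mul_zero, add_zero, hg]
    · rw [← (Fin.consEquiv (fun _ => 𝒳)).sum_comp, Fintype.sum_prod_type]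
      simp only [Fin.consEquiv_apply, Fin.prod_univ_succ, Fin.sum_univ_succ, Fin.cons_zero,
        Fin.cons_succ]
      have : ∀ a : 𝒳, ∑ y : Fin n → 𝒳, p a * (∏ i, p (y i)) * (g a + ∑ i, g (y i)) ^ 2 =
          p a * g a ^ 2 * (∑ y : Fin n → 𝒳, ∏ i, p (y i)) +
          2 * p a * g a * (∑ y : Fin n → 𝒳, (∏ i, p (y i)) * ∑ i, g (y i)) +
          p a * ∑ y : Fin n → 𝒳, (∏ i, p (y i)) * (∑ i, g (y i)) ^ 2 := by
        intro a
        rw [Finset.mul_sum, Finset.mul_sum, Finset.mul_sum, ← Finset.sum_add_distrib,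
          ← Finset.sum_add_distrib]
        exact Finset.sum_congr rfl fun y _ => by ring
      simp only [this, h0, h1, h2, mul_one, mul_zero, add_zero]
      rw [Finset.sum_add_distrib, ← Finset.sum_mul, hp1]
      push_cast; ring

lemma aux_prob_mono {α : Type*} [Fintype α] (P : α → ℝ) (hP : ∀ x, 0 ≤ P x) {A B : Set α}
    (h : A ⊆ B) : prob P A ≤ prob P B :=
  Finset.sum_le_sum fun x _ => Set.indicator_le_indicator_of_subset h hP x

lemma aux_prob_nonneg {α : Type*} [Fintype α] (P : α → ℝ) (hP : ∀ x, 0 ≤ P x) (A : Set α) :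
    0 ≤ prob P A :=
  Finset.sum_nonneg fun x _ => Set.indicator_nonneg (fun x _ => hP x) x

lemma aux_prob_compl {α : Type*} [Fintype α] (P : α → ℝ) (A : Set α) :
    prob P A + prob P Aᶜ = ∑ x, P x := by
  unfold prob
  rw [← Finset.sum_add_distrib]
  exact Finset.sum_congr rfl fun x _ => Set.indicator_self_add_compl_apply A P x

lemma aux_cheb (p f : 𝒳 → ℝ) (hp0 : ∀ x, 0 ≤ p x) (hp1 : ∑ x, p x = 1) (V γ : ℝ) (hγ : 0 < γ)
    (hV : ∑ x, p x * f x ^ 2 ≤ V) (n : ℕ) (hn : 0 < n) :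
    prob (fun x : Fin n → 𝒳 => ∏ i, p (x i))
      {x | n * γ ≤ |∑ i, f (x i) - n * ∑ a, p a * f a|} ≤ V / (n * γ ^ 2) := by
  set m := ∑ a, p a * f a with hm
  have hg : ∑ x, p x * (f x - m) = 0 := by
    simp only [mul_sub, Finset.sum_sub_distrib, ← Finset.sum_mul, hp1]; rw [← hm]; ring
  have hg2 : ∑ x, p x * (f x - m) ^ 2 ≤ V := by
    have : ∑ x, p x * (f x - m) ^ 2 = ∑ x, p x * f x ^ 2 - m ^ 2 := by
      have : ∀ x, p x * (f x - m) ^ 2 = p x * f x ^ 2 - 2 * m * (p x * f x) + m ^ 2 * p x := by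
        intro x; ring
      simp only [this, Finset.sum_add_distrib, Finset.sum_sub_distrib, ← Finset.mul_sum, hp1]
      rw [← hm]; ring
    nlinarith [sq_nonneg m]
  have h2 := (aux_moment p (fun x => f x - m) hp1 hg n).2
  have hn' : (0 : ℝ) < n := by exact_mod_cast hn
  have key : (n * γ) ^ 2 * prob (fun x : Fin n → 𝒳 => ∏ i, p (x i))
      {x | n * γ ≤ |∑ i, f (x i) - n * m|} ≤ n * V := by
    refine le_trans ?_ (mul_le_mul_of_nonneg_left hg2 hn'.le)
    rw [← h2]
    unfold prob
    rw [Finset.mul_sum]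
    refine Finset.sum_le_sum fun x _ => ?_
    have hpx : 0 ≤ ∏ i, p (x i) := Finset.prod_nonneg fun i _ => hp0 _
    by_cases hx : x ∈ {x : Fin n → 𝒳 | n * γ ≤ |∑ i, f (x i) - n * m|}
    · rw [Set.indicator_of_mem hx, mul_comm]
      refine mul_le_mul_of_nonneg_left ?_ hpx
      have : ∑ i, (f (x i) - m) = ∑ i, f (x i) - n * m := by
        simp [Finset.sum_sub_distrib]
      rw [this, ← sq_abs (∑ i, f (x i) - n * m)]
      exact pow_le_pow_left₀ (by positivity) hx 2
    · rw [Set.indicator_of_notMem hx, mul_zero]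
      positivity
  rw [le_div_iff₀ (by positivity)]
  have := le_of_mul_le_mul_left (a := (n:ℝ)) (b := prob (fun x : Fin n → 𝒳 => ∏ i, p (x i))
      {x | n * γ ≤ |∑ i, f (x i) - n * m|} * (n * γ^2)) (c := V) (by nlinarith [key]) hn'
  exact this

lemma aux_KL_cont (Q : 𝒳 → ℝ) (hQ0 : ∀ x, 0 < Q x) : Continuous fun p : 𝒳 → ℝ => KL p Q := by
  unfold KL
  refine continuous_finsetSum _ fun x _ => ?_
  have : (fun p : 𝒳 → ℝ => p x * Real.log (p x / Q x)) =
      fun p => Q x * ((p x / Q x) * Real.log (p x / Q x)) := by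
    ext p; have := (hQ0 x).ne'; field_simp
  rw [this]
  exact continuous_const.mul (Real.continuous_mul_log.comp ((continuous_apply x).div_const _))

lemma aux_net (Q : 𝒳 → ℝ) (hQ0 : ∀ x, 0 < Q x) (hQ1 : ∑ x, Q x = 1) (R δ : ℝ) (hδ : 0 < δ) :
    ∃ t : Finset {f : 𝒳 → ℝ // ∑ x, Q x * Real.exp (f x) ≤ 1},
      ∀ p : 𝒳 → ℝ, (∀ x, 0 ≤ p x) → ∑ x, p x = 1 → R ≤ KL p Q →
        ∃ f ∈ t, R - δ < ∑ x, p x * f.1 x := by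
  have hK : IsCompact (stdSimplex ℝ 𝒳 ∩ {p | R ≤ KL p Q}) :=
    (isCompact_stdSimplex ℝ 𝒳).inter_right (isClosed_le continuous_const (aux_KL_cont Q hQ0))
  obtain ⟨t, ht⟩ := hK.elim_finite_subcover
    (fun f : {f : 𝒳 → ℝ // ∑ x, Q x * Real.exp (f x) ≤ 1} => {p : 𝒳 → ℝ | R - δ < ∑ x, p x * f.1 x})
    (fun f => isOpen_lt continuous_const (by fun_prop)) (by
      rintro p ⟨⟨hp0, hp1⟩, hpR⟩
      set η := Real.exp (-(δ/2)) with hη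
      have hη0 : 0 < η := Real.exp_pos _
      have hη1 : η < 1 := by rw [hη, Real.exp_lt_one_iff]; linarith
      have hpos : ∀ x, 0 < η * p x + (1 - η) * Q x := fun x => by
        have := mul_nonneg hη0.le (hp0 x)
        have := mul_pos (sub_pos.2 hη1) (hQ0 x)
        linarith
      refine Set.mem_iUnion.2 ⟨⟨fun x => Real.log ((η * p x + (1 - η) * Q x) / Q x), ?_⟩, ?_⟩
      · have : ∀ x, Q x * Real.exp (Real.log ((η * p x + (1 - η) * Q x) / Q x)) =
            η * p x + (1 - η) * Q x := fun x => by
          rw [Real.exp_log (div_pos (hpos x) (hQ0 x))]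
          have := (hQ0 x).ne'; field_simp
        simp only [this, Finset.sum_add_distrib, ← Finset.mul_sum, hp1, hQ1]
        linarith
      · have hR : R ≤ KL p Q := hpR
        have : KL p Q - δ / 2 ≤ ∑ x, p x * Real.log ((η * p x + (1 - η) * Q x) / Q x) := by
          have e : KL p Q - δ / 2 = ∑ x, (p x * Real.log (p x / Q x) - p x * (δ/2)) := by
            rw [Finset.sum_sub_distrib, ← Finset.sum_mul, hp1, one_mul]; rfl
          rw [e]
          refine Finset.sum_le_sum fun x _ => ?_
          rcases (hp0 x).eq_or_lt with h | h
          · rw [← h]; simp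
          · rw [← mul_sub]
            refine mul_le_mul_of_nonneg_left ?_ h.le
            have : Real.log (p x / Q x) - δ / 2 = Real.log (η * p x / Q x) := by
              rw [mul_div_assoc, Real.log_mul hη0.ne' (div_pos h (hQ0 x)).ne', hη, Real.log_exp]
              ring
            rw [this]
            refine Real.log_le_log (div_pos (mul_pos hη0 h) (hQ0 x)) ?_
            have h3 := mul_pos (sub_pos.2 hη1) (hQ0 x)
            exact div_le_div_of_nonneg_right (by linarith) (hQ0 x).le
        show R - δ < _
        linarith)
  refine ⟨t, fun p hp0 hp1 hR => ?_⟩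
  have := ht ⟨⟨hp0, hp1⟩, hR⟩
  simpa using this

lemma aux_plog2 (p q : ℝ) (hp0 : 0 ≤ p) (hp1 : p ≤ 1) (hq : 0 < q) :
    p * Real.log (p / q) ^ 2 ≤ 8 + 2 * Real.log q ^ 2 := by
  rcases hp0.eq_or_lt with h | h
  · rw [← h]; simp; positivity
  · rw [Real.log_div h.ne' hq.ne']
    have h1 := Real.abs_log_mul_self_lt (Real.sqrt p) (Real.sqrt_pos.2 h) (by simpa using hp1)
    have h2 : (Real.log (Real.sqrt p) * Real.sqrt p) ^ 2 < 1 := by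
      rw [sq_lt_one_iff_abs_lt_one]; exact h1
    rw [mul_pow, Real.sq_sqrt hp0, Real.log_sqrt hp0] at h2
    have h3 : p * Real.log q ^ 2 ≤ Real.log q ^ 2 := mul_le_of_le_one_left (sq_nonneg _) hp1
    have h4 : 0 ≤ p * (Real.log p + Real.log q) ^ 2 := by positivity
    nlinarith

lemma aux_p_le_one (p : 𝒳 → ℝ) (hp0 : ∀ x, 0 ≤ p x) (hp1 : ∑ x, p x = 1) (x : 𝒳) : p x ≤ 1 := by
  rw [← hp1]; exact Finset.single_le_sum (fun i _ => hp0 i) (Finset.mem_univ x)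

/-- one-sided bound for the second kind error of an exponential test -/
lemma aux_markov (Q f : 𝒳 → ℝ) (hQ0 : ∀ x, 0 < Q x) (hf : ∑ x, Q x * Real.exp (f x) ≤ 1) (n : ℕ)
    (c : ℝ) : prob (fun x : Fin n → 𝒳 => ∏ i, Q (x i)) {x | c ≤ ∑ i, f (x i)} ≤ Real.exp (-c) := by
  have h1 : ∑ x : Fin n → 𝒳, Real.exp (-c) * ∏ i, (Q (x i) * Real.exp (f (x i))) ≤ Real.exp (-c) := by
    rw [← Finset.mul_sum, ← Fintype.sum_pow (fun a => Q a * Real.exp (f a))]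
    refine mul_le_of_le_one_right (Real.exp_pos _).le (pow_le_one₀ ?_ hf)
    exact Finset.sum_nonneg fun x _ => mul_nonneg (hQ0 x).le (Real.exp_pos _).le
  refine le_trans (Finset.sum_le_sum fun x _ => ?_) h1
  have hp : 0 ≤ ∏ i, Q (x i) := Finset.prod_nonneg fun i _ => (hQ0 _).le
  rw [Finset.prod_mul_distrib, ← Real.exp_sum, mul_left_comm, ← Real.exp_add]
  by_cases hx : x ∈ {x : Fin n → 𝒳 | c ≤ ∑ i, f (x i)}
  · rw [Set.indicator_of_mem hx]
    refine le_mul_of_one_le_right hp (Real.one_le_exp ?_)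
    have : c ≤ ∑ i, f (x i) := hx
    linarith
  · rw [Set.indicator_of_notMem hx]; positivity

/-- change of measure -/
lemma aux_change (p Q : 𝒳 → ℝ) (hp0 : ∀ x, 0 ≤ p x) (hp1 : ∑ x, p x = 1) (hQ0 : ∀ x, 0 < Q x)
    (V γ : ℝ) (hγ : 0 < γ) (hV : ∑ x, p x * Real.log (p x / Q x) ^ 2 ≤ V) (n : ℕ) (hn : 0 < n)
    (A : Set (Fin n → 𝒳)) :
    prob (fun x : Fin n → 𝒳 => ∏ i, p (x i)) A ≤ V / (n * γ ^ 2) +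
      Real.exp (n * (KL p Q + γ)) * prob (fun x : Fin n → 𝒳 => ∏ i, Q (x i)) A := by
  refine le_trans ?_ (add_le_add_left
    (aux_cheb p (fun x => Real.log (p x / Q x)) hp0 hp1 V γ hγ hV n hn) _)
  unfold prob
  rw [Finset.mul_sum _ _ (Real.exp _), ← Finset.sum_add_distrib]
  refine Finset.sum_le_sum fun x _ => ?_
  have hpx : 0 ≤ ∏ i, p (x i) := Finset.prod_nonneg fun i _ => hp0 _
  have hqx : 0 ≤ ∏ i, Q (x i) := Finset.prod_nonneg fun i _ => (hQ0 _).le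
  have hq' : 0 ≤ Real.exp (n * (KL p Q + γ)) * A.indicator (fun x => ∏ i, Q (x i)) x :=
    mul_nonneg (Real.exp_pos _).le (Set.indicator_nonneg
      (fun x _ => Finset.prod_nonneg fun i _ => (hQ0 _).le) x)
  have hs : ∀ S : Set (Fin n → 𝒳), 0 ≤ S.indicator (fun x => ∏ i, p (x i)) x := fun S =>
    Set.indicator_nonneg (fun x _ => Finset.prod_nonneg fun i _ => hp0 _) x
  by_cases hA : x ∈ A
  swap
  · rw [Set.indicator_of_notMem hA]; exact add_nonneg (hs _) hq'
  by_cases hx : x ∈ {x : Fin n → 𝒳 | n * γ ≤ |∑ i, Real.log (p (x i) / Q (x i)) -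
      n * ∑ a, p a * Real.log (p a / Q a)|}
  · rw [Set.indicator_of_mem hx, Set.indicator_of_mem hA]
    exact le_add_of_nonneg_right hq'
  · rw [Set.indicator_of_notMem hx, Set.indicator_of_mem hA, Set.indicator_of_mem hA, zero_add]
    by_cases h0 : ∃ i, p (x i) = 0
    · obtain ⟨i, hi⟩ := h0
      rw [Finset.prod_eq_zero (Finset.mem_univ i) hi]; positivity
    · push Not at h0
      have hx' : |∑ i, Real.log (p (x i) / Q (x i)) - n * KL p Q| < n * γ := not_le.1 hx
      have h2 : ∏ i, p (x i) = Real.exp (∑ i, Real.log (p (x i) / Q (x i))) * ∏ i, Q (x i) := by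
        rw [Real.exp_sum, ← Finset.prod_mul_distrib]
        refine Finset.prod_congr rfl fun i _ => ?_
        rw [Real.exp_log (div_pos ((hp0 _).lt_of_ne (h0 i).symm) (hQ0 _))]
        have := (hQ0 (x i)).ne'; field_simp
      rw [h2]
      refine mul_le_mul_of_nonneg_right (Real.exp_le_exp.2 ?_) hqx
      have := (abs_lt.1 hx').2
      linarith

lemma aux_prod_nonneg (p : 𝒳 → ℝ) (hp0 : ∀ x, 0 ≤ p x) (n : ℕ) (x : Fin n → 𝒳) :
    0 ≤ ∏ i, p (x i) := Finset.prod_nonneg fun i _ => hp0 _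

lemma aux_prob_le_one (p : 𝒳 → ℝ) (hp0 : ∀ x, 0 ≤ p x) (hp1 : ∑ x, p x = 1) (n : ℕ)
    (A : Set (Fin n → 𝒳)) : prob (fun x : Fin n → 𝒳 => ∏ i, p (x i)) A ≤ 1 := by
  have h1 := aux_prob_compl (fun x : Fin n → 𝒳 => ∏ i, p (x i)) A
  rw [aux_prob_univ n p hp1] at h1
  have := aux_prob_nonneg (fun x : Fin n → 𝒳 => ∏ i, p (x i)) (aux_prod_nonneg p hp0 n) Aᶜ
  linarith

lemma aux_exp_bound (Q : 𝒳 → ℝ) (hQ0 : ∀ x, 0 < Q x) (hQ1 : ∑ x, Q x = 1) :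
    ∃ B : ℝ, ∀ (A : (n : ℕ) → Set (Fin n → 𝒳)) (n : ℕ),
      0 ≤ (1 / (n : ℝ)) * Real.log (1 / typeII (fun n x => ∏ i, Q (x i)) A n) ∧
      (1 / (n : ℝ)) * Real.log (1 / typeII (fun n x => ∏ i, Q (x i)) A n) ≤ B := by
  have hne : (Finset.univ : Finset 𝒳).Nonempty := by
    by_contra h
    rw [Finset.not_nonempty_iff_eq_empty] at h
    rw [h] at hQ1; simp at hQ1
  obtain ⟨x0, -, hx0⟩ := Finset.exists_min_image Finset.univ Q hne
  have hb := hQ0 x0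
  have hb1 : Q x0 ≤ 1 := aux_p_le_one Q (fun x => (hQ0 x).le) hQ1 x0
  have hlog : Real.log (Q x0) ≤ 0 := Real.log_nonpos hb.le hb1
  refine ⟨-Real.log (Q x0), fun A n => ?_⟩
  have hnn : 0 ≤ typeII (fun n x => ∏ i, Q (x i)) A n :=
    aux_prob_nonneg _ (aux_prod_nonneg Q (fun x => (hQ0 x).le) n) _
  have hle : typeII (fun n x => ∏ i, Q (x i)) A n ≤ 1 :=
    aux_prob_le_one Q (fun x => (hQ0 x).le) hQ1 n _
  rw [one_div (typeII _ _ _), Real.log_inv]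
  constructor
  · exact mul_nonneg (by positivity) (neg_nonneg.2 (Real.log_nonpos hnn hle))
  · rcases Nat.eq_zero_or_pos n with rfl | hn
    · simpa using hlog
    have hn' : (0 : ℝ) < n := by exact_mod_cast hn
    rw [one_div, inv_mul_le_iff₀ hn', mul_neg, neg_le_neg_iff]
    by_cases hA : (A n).Nonempty
    · obtain ⟨y, hy⟩ := hA
      rw [← Real.log_pow]
      refine Real.log_le_log (pow_pos hb n) ?_
      have h1 : Q x0 ^ n ≤ ∏ i, Q (y i) := by
        have := Finset.prod_le_prod (s := (Finset.univ : Finset (Fin n))) (f := fun _ => Q x0)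
          (g := fun i => Q (y i)) (fun i _ => hb.le) (fun i _ => hx0 _ (Finset.mem_univ _))
        simpa using this
      refine h1.trans ?_
      have := Finset.single_le_sum (s := Finset.univ)
        (f := (A n).indicator (fun x : Fin n → 𝒳 => ∏ i, Q (x i)))
        (fun x _ => Set.indicator_nonneg (fun x _ => aux_prod_nonneg Q (fun x => (hQ0 x).le) n x) x)
        (Finset.mem_univ y)
      rw [Set.indicator_of_mem hy] at this
      exact this
    · rw [Set.not_nonempty_iff_eq_empty] at hA
      have : typeII (fun n x => ∏ i, Q (x i)) A n = 0 := by
        simp [typeII, prob, hA]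
      rw [this, Real.log_zero]
      exact mul_nonpos_of_nonneg_of_nonpos hn'.le hlog

variable {Θ : Type*} [MeasurableSpace Θ]

lemma aux_prod_int (w : Measure Θ) [IsProbabilityMeasure w] (P : Θ → 𝒳 → ℝ)
    (hmeas : ∀ x : 𝒳, Measurable fun θ => P θ x)
    (hdist : ∀ θ, (∀ x, 0 ≤ P θ x) ∧ (∑ x, P θ x) = 1) (n : ℕ) (x : Fin n → 𝒳) :
    Integrable (fun θ => ∏ i, P θ (x i)) w := by
  refine Integrable.of_bound (C := 1)
    (Finset.measurable_fun_prod _ fun i _ => hmeas (x i)).aestronglyMeasurable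
    (Filter.Eventually.of_forall fun θ => ?_)
  rw [Real.norm_eq_abs, abs_of_nonneg (aux_prod_nonneg _ (hdist θ).1 n x)]
  exact Finset.prod_le_one (fun i _ => (hdist θ).1 _)
    fun i _ => aux_p_le_one _ (hdist θ).1 (hdist θ).2 _

lemma aux_prob_int (w : Measure Θ) [IsProbabilityMeasure w] (P : Θ → 𝒳 → ℝ)
    (hmeas : ∀ x : 𝒳, Measurable fun θ => P θ x)
    (hdist : ∀ θ, (∀ x, 0 ≤ P θ x) ∧ (∑ x, P θ x) = 1) (n : ℕ) (A : Set (Fin n → 𝒳)) :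
    Integrable (fun θ => prob (fun x : Fin n → 𝒳 => ∏ i, P θ (x i)) A) w ∧
    prob (fun x : Fin n → 𝒳 => ∫ θ, (∏ i, P θ (x i)) ∂w) A =
      ∫ θ, prob (fun x : Fin n → 𝒳 => ∏ i, P θ (x i)) A ∂w := by
  have hi : ∀ x : Fin n → 𝒳,
      Integrable (fun θ => A.indicator (fun x : Fin n → 𝒳 => ∏ i, P θ (x i)) x) w := by
    intro x
    by_cases hx : x ∈ A
    · simp only [Set.indicator_of_mem hx]; exact aux_prod_int w P hmeas hdist n x
    · simp only [Set.indicator_of_notMem hx]; exact integrable_zero _ _ _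
  constructor
  · exact integrable_finsetSum _ fun x _ => hi x
  · unfold prob
    rw [integral_finsetSum _ fun x _ => hi x]
    refine Finset.sum_congr rfl fun x _ => ?_
    by_cases hx : x ∈ A
    · simp only [Set.indicator_of_mem hx]
    · simp only [Set.indicator_of_notMem hx, integral_zero]

lemma aux_typeI_bd (w : Measure Θ) [IsProbabilityMeasure w] (P : Θ → 𝒳 → ℝ)
    (hmeas : ∀ x : 𝒳, Measurable fun θ => P θ x)
    (hdist : ∀ θ, (∀ x, 0 ≤ P θ x) ∧ (∑ x, P θ x) = 1) (A : (n : ℕ) → Set (Fin n → 𝒳)) (n : ℕ) :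
    0 ≤ typeI (fun n x => ∫ θ, (∏ i, P θ (x i)) ∂w) A n ∧
    typeI (fun n x => ∫ θ, (∏ i, P θ (x i)) ∂w) A n ≤ 1 := by
  obtain ⟨h1, h2⟩ := aux_prob_int w P hmeas hdist n (A n)ᶜ
  unfold typeI
  rw [h2]
  constructor
  · exact integral_nonneg fun θ => aux_prob_nonneg _ (aux_prod_nonneg _ (hdist θ).1 n) _
  · have := integral_mono h1 (integrable_const (1:ℝ))
      (fun θ => aux_prob_le_one (P θ) (hdist θ).1 (hdist θ).2 n (A n)ᶜ)
    simpa using this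

lemma aux_meas (P : Θ → 𝒳 → ℝ) (hmeas : ∀ x : 𝒳, Measurable fun θ => P θ x) (Q : 𝒳 → ℝ) (R : ℝ) :
    MeasurableSet {θ | KL (P θ) Q < R} := by
  have : Measurable fun θ => KL (P θ) Q := by
    unfold KL
    refine Finset.measurable_fun_sum _ fun x _ => ?_
    exact (hmeas x).mul (Real.measurable_log.comp ((hmeas x).div_const _))
  exact measurableSet_lt this measurable_const

lemma aux_converse (w : Measure Θ) [IsProbabilityMeasure w]
    (P : Θ → 𝒳 → ℝ)
    (hmeas : ∀ x : 𝒳, Measurable fun θ => P θ x)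
    (hdist : ∀ θ, (∀ x, 0 ≤ P θ x) ∧ (∑ x, P θ x) = 1)
    (Q : 𝒳 → ℝ) (hQ0 : ∀ x, 0 < Q x) (hQ1 : ∑ x, Q x = 1) (ε R δ : ℝ) (hδ : 0 < δ)
    (h : EpsAchievable (fun n x => ∫ θ, (∏ i, P θ (x i)) ∂w) (fun n x => ∏ i, Q (x i)) ε R) :
    (w {θ | KL (P θ) Q < R - δ}).toReal ≤ ε := by
  obtain ⟨A, hA1, hA2⟩ := h
  by_contra hc
  push Not at hc
  set S := {θ | KL (P θ) Q < R - δ} with hS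
  have hSm : MeasurableSet S := aux_meas P hmeas Q _
  set c := (w S).toReal with hcdef
  obtain ⟨B, hB⟩ := aux_exp_bound Q hQ0 hQ1
  set V : ℝ := ∑ x, (8 + 2 * Real.log (Q x) ^ 2) with hV
  let s : ℕ → ℝ := fun n => V / (n * (δ/4) ^ 2) + Real.exp (-(n * (δ/2)))
  have hs : Tendsto (fun n => c * (1 - s n)) atTop (nhds c) := by
    have hs0 : Tendsto s atTop (nhds (0 + 0)) := by
      refine Tendsto.add ?_ ?_
      · refine tendsto_const_nhds.div_atTop ?_
        exact tendsto_natCast_atTop_atTop.atTop_mul_const (by positivity)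
      · refine Real.tendsto_exp_neg_atTop_nhds_zero.comp ?_
        exact tendsto_natCast_atTop_atTop.atTop_mul_const (by positivity)
    have := (hs0.const_sub 1).const_mul c
    simpa using this
  have e1 : ∀ᶠ n in atTop, (c + ε) / 2 < c * (1 - s n) :=
    hs.eventually_const_lt (by linarith)
  have e2 : ∀ᶠ n in atTop, typeI (fun n x => ∫ θ, (∏ i, P θ (x i)) ∂w) A n < (c + ε) / 2 := by
    refine eventually_lt_of_limsup_lt (lt_of_le_of_lt hA1 (by linarith)) ?_
    exact isBoundedUnder_of ⟨1, fun n => (aux_typeI_bd w P hmeas hdist A n).2⟩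
  have e3 : ∀ᶠ n : ℕ in atTop, R - δ/4 <
      (1 / (n : ℝ)) * Real.log (1 / typeII (fun n x => ∏ i, Q (x i)) A n) := by
    refine eventually_lt_of_lt_liminf (lt_of_lt_of_le (by linarith) hA2) ?_
    exact isBoundedUnder_of ⟨0, fun n => (hB A n).1⟩
  obtain ⟨n, h1, h2, h3, hn⟩ := (e1.and (e2.and (e3.and (eventually_gt_atTop 0)))).exists
  have hn' : (0 : ℝ) < n := by exact_mod_cast hn
  have hlam : typeII (fun n x => ∏ i, Q (x i)) A n ≤ Real.exp (-(n * (R - δ/4))) := by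
    have hnn : 0 ≤ typeII (fun n x => ∏ i, Q (x i)) A n :=
      aux_prob_nonneg _ (aux_prod_nonneg Q (fun x => (hQ0 x).le) n) _
    rcases hnn.eq_or_lt with h0 | h0
    · rw [← h0]; exact (Real.exp_pos _).le
    · rw [one_div (typeII _ _ _), Real.log_inv, one_div, lt_inv_mul_iff₀ hn'] at h3
      rw [← Real.log_le_iff_le_exp h0]
      linarith
  have hθ : ∀ θ ∈ S, 1 - s n ≤ prob (fun x : Fin n → 𝒳 => ∏ i, P θ (x i)) (A n)ᶜ := by
    intro θ hθ
    have hk : KL (P θ) Q < R - δ := hθ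
    have g1 := aux_change (P θ) Q (hdist θ).1 (hdist θ).2 hQ0 V (δ/4) (by positivity)
      (Finset.sum_le_sum fun x _ => aux_plog2 _ _ ((hdist θ).1 x)
        (aux_p_le_one _ (hdist θ).1 (hdist θ).2 x) (hQ0 x)) n hn (A n)
    have g2 := aux_prob_compl (fun x : Fin n → 𝒳 => ∏ i, P θ (x i)) (A n)
    rw [aux_prob_univ n _ (hdist θ).2] at g2
    have g3 : Real.exp (n * (KL (P θ) Q + δ/4)) * prob (fun x : Fin n → 𝒳 => ∏ i, Q (x i)) (A n)
        ≤ Real.exp (-(n * (δ/2))) := by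
      refine (mul_le_mul_of_nonneg_left hlam (Real.exp_pos _).le).trans ?_
      rw [← Real.exp_add]
      refine Real.exp_le_exp.2 ?_
      nlinarith
    simp only [s]
    linarith
  obtain ⟨i1, i2⟩ := aux_prob_int w P hmeas hdist n (A n)ᶜ
  have hfin : c * (1 - s n) ≤ typeI (fun n x => ∫ θ, (∏ i, P θ (x i)) ∂w) A n := by
    unfold typeI
    rw [i2]
    have : c * (1 - s n) = ∫ θ, S.indicator (fun _ => 1 - s n) θ ∂w := by
      rw [integral_indicator_const _ hSm]; rfl
    rw [this]
    refine integral_mono ((integrable_const _).indicator hSm) i1 fun θ => ?_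
    by_cases hm : θ ∈ S
    · rw [Set.indicator_of_mem hm]; exact hθ θ hm
    · rw [Set.indicator_of_notMem hm]
      exact aux_prob_nonneg _ (aux_prod_nonneg _ (hdist θ).1 n) _
  linarith

lemma aux_direct (w : Measure Θ) [IsProbabilityMeasure w]
    (P : Θ → 𝒳 → ℝ)
    (hmeas : ∀ x : 𝒳, Measurable fun θ => P θ x)
    (hdist : ∀ θ, (∀ x, 0 ≤ P θ x) ∧ (∑ x, P θ x) = 1)
    (Q : 𝒳 → ℝ) (hQ0 : ∀ x, 0 < Q x) (hQ1 : ∑ x, Q x = 1) (ε R δ : ℝ) (hδ : 0 < δ)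
    (hε1 : ε < 1)
    (h : (w {θ | KL (P θ) Q < R}).toReal ≤ ε) :
    EpsAchievable (fun n x => ∫ θ, (∏ i, P θ (x i)) ∂w) (fun n x => ∏ i, Q (x i)) ε
      (R - 3 * δ) := by
  classical
  obtain ⟨t, ht⟩ := aux_net Q hQ0 hQ1 R δ hδ
  set S := {θ | KL (P θ) Q < R} with hS
  have hSm : MeasurableSet S := aux_meas P hmeas Q _
  obtain ⟨B, hB⟩ := aux_exp_bound Q hQ0 hQ1
  set V : ℝ := ∑ f ∈ t, ∑ x, f.1 x ^ 2 with hV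
  have hV0 : 0 ≤ V := Finset.sum_nonneg fun f _ => Finset.sum_nonneg fun x _ => sq_nonneg _
  let A : (n : ℕ) → Set (Fin n → 𝒳) := fun n =>
    {x | ∃ f ∈ t, n * (R - 2 * δ) ≤ ∑ i, f.1 (x i)}
  have hmu : ∀ n : ℕ, 0 < n →
      typeI (fun n x => ∫ θ, (∏ i, P θ (x i)) ∂w) A n ≤ ε + V / (n * δ ^ 2) := by
    intro n hn
    have hn' : (0 : ℝ) < n := by exact_mod_cast hn
    obtain ⟨i1, i2⟩ := aux_prob_int w P hmeas hdist n (A n)ᶜ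
    unfold typeI
    rw [i2]
    have hle : ∀ θ, prob (fun x : Fin n → 𝒳 => ∏ i, P θ (x i)) (A n)ᶜ ≤
        S.indicator (fun _ => (1:ℝ)) θ + V / (n * δ ^ 2) := by
      intro θ
      have hp := (hdist θ).1
      by_cases hm : θ ∈ S
      · rw [Set.indicator_of_mem hm]
        have := aux_prob_le_one (P θ) hp (hdist θ).2 n (A n)ᶜ
        have : 0 ≤ V / (n * δ ^ 2) := by positivity
        linarith
      · rw [Set.indicator_of_notMem hm, zero_add]
        have hk : R ≤ KL (P θ) Q := not_lt.1 hm
        obtain ⟨f, hft, hf⟩ := ht _ hp (hdist θ).2 hk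
        refine le_trans (aux_prob_mono _ (aux_prod_nonneg _ hp n) ?_)
          (aux_cheb (P θ) f.1 hp (hdist θ).2 V δ hδ ?_ n hn)
        · intro x hx
          have hx1 : ∑ i, f.1 (x i) < n * (R - 2 * δ) := by
            by_contra hcon
            exact hx ⟨f, hft, not_lt.1 hcon⟩
          show n * δ ≤ |∑ i, f.1 (x i) - n * ∑ a, P θ a * f.1 a|
          rw [abs_sub_comm]
          refine le_trans ?_ (le_abs_self _)
          nlinarith
        · refine le_trans (Finset.sum_le_sum fun x _ => ?_)
            (Finset.single_le_sum (f := fun f : {f : 𝒳 → ℝ // ∑ x, Q x * Real.exp (f x) ≤ 1} =>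
              ∑ x, f.1 x ^ 2) (fun f _ => Finset.sum_nonneg fun x _ => sq_nonneg _) hft)
          exact mul_le_of_le_one_left (sq_nonneg _) (aux_p_le_one _ hp (hdist θ).2 x)
    have i3 : Integrable (S.indicator (fun _ => (1:ℝ))) w := (integrable_const _).indicator hSm
    have := integral_mono i1 (i3.add (integrable_const (V / (n * δ ^ 2)))) hle
    refine this.trans ?_
    simp only [Pi.add_apply]
    rw [integral_add i3 (integrable_const _), integral_indicator_const _ hSm]
    have h' : w.real S ≤ ε := h
    simpa using h'
  have htend : Tendsto (fun n : ℕ => ε + V / (n * δ ^ 2)) atTop (nhds ε) := by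
    have : Tendsto (fun n : ℕ => V / (n * δ ^ 2)) atTop (nhds 0) := by
      refine tendsto_const_nhds.div_atTop ?_
      exact tendsto_natCast_atTop_atTop.atTop_mul_const (by positivity)
    simpa using this.const_add ε
  have hev := (eventually_gt_atTop 0).mono hmu
  refine ⟨A, ?_, ?_⟩
  · rw [← htend.limsup_eq]
    refine limsup_le_limsup hev ?_ htend.isBoundedUnder_le
    exact (isBoundedUnder_of (r := (· ≥ ·)) ⟨0, fun n =>
      (aux_typeI_bd w P hmeas hdist A n).1⟩).isCoboundedUnder_le
  · refine le_liminf_of_le ((isBoundedUnder_of (r := (· ≤ ·)) ⟨B, fun n =>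
      (hB A n).2⟩).isCoboundedUnder_ge) ?_
    have hN : Tendsto (fun n : ℕ => (n : ℝ) * δ) atTop atTop :=
      tendsto_natCast_atTop_atTop.atTop_mul_const hδ
    filter_upwards [hev, htend.eventually_lt_const hε1, eventually_gt_atTop 0,
      hN.eventually_ge_atTop (Real.log (t.card + 1))] with n h1 h2 hn h4
    have hn' : (0 : ℝ) < n := by exact_mod_cast hn
    have hQn := fun x => (hQ0 x).le
    have hnn : 0 ≤ typeII (fun n x => ∏ i, Q (x i)) A n :=
      aux_prob_nonneg _ (aux_prod_nonneg Q hQn n) _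
    have hpos : 0 < typeII (fun n x => ∏ i, Q (x i)) A n := by
      by_cases hA : (A n).Nonempty
      · obtain ⟨y, hy⟩ := hA
        have := Finset.single_le_sum (s := Finset.univ)
          (f := (A n).indicator (fun x : Fin n → 𝒳 => ∏ i, Q (x i)))
          (fun x _ => Set.indicator_nonneg (fun x _ => aux_prod_nonneg Q hQn n x) x)
          (Finset.mem_univ y)
        rw [Set.indicator_of_mem hy] at this
        exact lt_of_lt_of_le (Finset.prod_pos fun i _ => hQ0 _) this
      · exfalso
        rw [Set.not_nonempty_iff_eq_empty] at hA
        have : typeI (fun n x => ∫ θ, (∏ i, P θ (x i)) ∂w) A n = 1 := by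
          unfold typeI
          rw [(aux_prob_int w P hmeas hdist n (A n)ᶜ).2, hA]
          have : ∀ θ, prob (fun x : Fin n → 𝒳 => ∏ i, P θ (x i)) (∅ᶜ) = 1 := fun θ => by
            simp only [prob, Set.compl_empty, Set.indicator_univ]
            exact aux_prob_univ n _ (hdist θ).2
          simp only [this]; simp
        linarith
    have hub : typeII (fun n x => ∏ i, Q (x i)) A n ≤
        (t.card + 1) * Real.exp (-(n * (R - 2 * δ))) := by
      have u1 : typeII (fun n x => ∏ i, Q (x i)) A n ≤
          ∑ f ∈ t, prob (fun x : Fin n → 𝒳 => ∏ i, Q (x i))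
            {x | n * (R - 2 * δ) ≤ ∑ i, f.1 (x i)} := by
        unfold typeII prob
        rw [Finset.sum_comm]
        refine Finset.sum_le_sum fun x _ => ?_
        have hnn2 : ∀ f : {f : 𝒳 → ℝ // ∑ x, Q x * Real.exp (f x) ≤ 1},
            0 ≤ Set.indicator {x : Fin n → 𝒳 | n * (R - 2 * δ) ≤ ∑ i, f.1 (x i)}
              (fun x : Fin n → 𝒳 => ∏ i, Q (x i)) x := fun f =>
          Set.indicator_nonneg (fun x _ => aux_prod_nonneg Q hQn n x) x
        by_cases hx : x ∈ A n
        · obtain ⟨f, hft, hf⟩ := id hx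
          refine le_trans ?_ (Finset.single_le_sum (fun f _ => hnn2 f) hft)
          rw [Set.indicator_of_mem hx, Set.indicator_of_mem]
          exact hf
        · rw [Set.indicator_of_notMem hx]
          exact Finset.sum_nonneg fun f _ => hnn2 f
      refine u1.trans ((Finset.sum_le_sum fun f _ => aux_markov Q f.1 hQ0 f.2 n _).trans ?_)
      rw [Finset.sum_const, nsmul_eq_mul]
      exact mul_le_mul_of_nonneg_right (by linarith) (Real.exp_pos _).le
    have hlog := Real.log_le_log hpos hub
    rw [Real.log_mul (by positivity) (Real.exp_pos _).ne', Real.log_exp] at hlog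
    rw [one_div (typeII _ _ _), Real.log_inv, one_div, le_inv_mul_iff₀ hn']
    nlinarith

end helpers

/-- **Theorem (Han):** first-order `ε`-optimum exponent for a mixed memoryless
null hypothesis `P_{X^n}(x) = ∫_Θ ∏ᵢ P_θ(xᵢ) dw(θ)` against a stationary
memoryless alternative `P_{X̄^n}(x) = ∏ᵢ P_{X̄}(xᵢ)`:
`B_ε(X‖X̄) = sup{ R : w({θ : D(P_θ‖P_{X̄}) < R}) ≤ ε }`. -/
theorem stmt_7 {𝒳 Θ : Type*} [Fintype 𝒳] [MeasurableSpace Θ]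
    (w : Measure Θ) [IsProbabilityMeasure w]
    (P : Θ → 𝒳 → ℝ)
    (hmeas : ∀ x : 𝒳, Measurable fun θ => P θ x)
    (hdist : ∀ θ, (∀ x, 0 ≤ P θ x) ∧ (∑ x, P θ x) = 1)
    (Q : 𝒳 → ℝ) (hQ0 : ∀ x, 0 < Q x) (hQ1 : ∑ x, Q x = 1)
    (ε : ℝ) (hε0 : 0 ≤ ε) (hε1 : ε < 1) :
    Beps (fun n x => ∫ θ, (∏ i, P θ (x i)) ∂w) (fun n x => ∏ i, Q (x i)) ε =
      sSup {R : ℝ | (w {θ | KL (P θ) Q < R}).toReal ≤ ε} := by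
  have hD := fun R δ hδ => aux_direct w P hmeas hdist Q hQ0 hQ1 ε R δ hδ hε1
  have hC := fun R δ hδ => aux_converse w P hmeas hdist Q hQ0 hQ1 ε R δ hδ
  obtain ⟨B, hB⟩ := aux_exp_bound Q hQ0 hQ1
  unfold Beps
  set L := {R : ℝ | EpsAchievable (fun n x => ∫ θ, (∏ i, P θ (x i)) ∂w)
    (fun n x => ∏ i, Q (x i)) ε R} with hL
  set T := {R : ℝ | (w {θ | KL (P θ) Q < R}).toReal ≤ ε} with hT
  have hLb : BddAbove L := by
    refine ⟨B, fun R hR => ?_⟩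
    obtain ⟨A, -, hA⟩ := hR
    refine hA.trans (Filter.liminf_le_of_le
      (Filter.isBoundedUnder_of (r := (· ≥ ·)) ⟨0, fun n => (hB A n).1⟩) ?_)
    intro b hb
    obtain ⟨n, hn⟩ := hb.exists
    exact hn.trans (hB A n).2
  have hLn : L.Nonempty := by
    refine ⟨0, fun _ => Set.univ, ?_, ?_⟩
    · have : typeI (fun n x => ∫ θ, (∏ i, P θ (x i)) ∂w) (fun n => (Set.univ : Set (Fin n → 𝒳))) =
          fun _ => 0 := by
        funext n; simp [typeI, prob]
      rw [this, Filter.limsup_const]; exact hε0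
    · refine Filter.le_liminf_of_le ((Filter.isBoundedUnder_of (r := (· ≤ ·)) ⟨B, fun n =>
        (hB _ n).2⟩).isCoboundedUnder_ge) (Filter.Eventually.of_forall fun n => (hB _ n).1)
  have hTn : T.Nonempty := by
    obtain ⟨R, hR⟩ := hLn
    exact ⟨R - 1, hC R 1 one_pos hR⟩
  have hTb : BddAbove T := by
    obtain ⟨b, hb⟩ := hLb
    refine ⟨b + 3, fun R hR => ?_⟩
    have := hb (hD R 1 one_pos hR)
    linarith
  apply le_antisymm
  · refine csSup_le hLn fun R hR => le_of_forall_pos_le_add fun δ hδ => ?_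
    have := le_csSup hTb (hC R δ hδ hR)
    linarith
  · refine csSup_le hTn fun R hR => le_of_forall_pos_le_add fun δ hδ => ?_
    have := le_csSup hLb (hD R (δ/3) (by positivity) hR)
    linarith
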